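/- Let G be a set of lines as in the context and let t_1, t_2 ∈ ℝ with t_1 ≠ t_2. Then |G| ≤ |t_1 − t_2|^{−(d−1)} · ℒ^{d−1}(π_{t_1}(G)) · ℒ^{d−1}(π_{t_2}(G)). -/

import Mathlib

open MeasureTheory ENNReal

noncomputable section

/-- `ℝ^{d-1}`, identified with the hyperplane `H` in `ℝ^d`. -/
abbrev Euc (n : ℕ) := EuclideanSpace ℝ (Fin n)

/-- The slice `π_t(G) = {x + tξ : (ξ,x) ∈ G_X}` of a set of lines `G`, where
`(ξ,x)` encodes the line through `x` and `x + ξ + e_d`. -/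
def lineSlice {n : ℕ} (G : Set (Euc n × Euc n)) (t : ℝ) : Set (Euc n) :=
  {y | ∃ w ∈ G, y = w.2 + t • w.1}

/-- `m(G) = sup_ξ ℒ^{d-1}({x : (ξ,x) ∈ G_X})`. -/
def mG {n : ℕ} (G : Set (Euc n × Euc n)) : ℝ≥0∞ :=
  ⨆ ξ : Euc n, volume {x : Euc n | (ξ, x) ∈ G}

/-- `D_{t,t'} = |t - t'|^{-(d-1)}` (as an extended real). -/
def Dcoef (d : ℕ) (t t' : ℝ) : ℝ≥0∞ :=
  ENNReal.ofReal |t - t'| ^ (-((d:ℝ) - 1))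

/-! A line is determined by its points at two different heights `t₁ ≠ t₂`, and the linear change of
variables `(ξ, x) ↦ (x + t₁ξ, x + t₂ξ)` has Jacobian `|t₁ - t₂|^{d-1}`. It carries `G` into the
rectangle `π_{t₁}(G) × π_{t₂}(G)`. -/

theorem measurePreserving_prod_add_comp_fst {α E : Type*} [MeasurableSpace α] [MeasurableSpace E]
    [Add E] [MeasurableAdd₂ E] {ν : Measure α} {μ : Measure E} [SFinite ν] [SFinite μ]
    [μ.IsAddRightInvariant] {f : α → E} (hf : Measurable f) :
    MeasurePreserving (fun w : α × E => (w.1, w.2 + f w.1)) (ν.prod μ) (ν.prod μ) :=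
  (MeasurePreserving.id ν).skew_product (g := fun a y => y + f a) (by fun_prop)
    (.of_forall fun a => map_add_right_eq_self μ (f a))

section TwoPoints

open Module

variable {E : Type*} [NormedAddCommGroup E] [NormedSpace ℝ E] [FiniteDimensional ℝ E]
  [MeasurableSpace E] [BorelSpace E] (μ : Measure E) [μ.IsAddHaarMeasure] {t₁ t₂ : ℝ}

theorem map_smul_eq_inv_pow_smul {r : ℝ} (hr : r ≠ 0) :
    μ.map (r • ·) = (ENNReal.ofReal |r| ^ finrank ℝ E)⁻¹ • μ := by
  rw [Measure.map_addHaar_smul μ hr, abs_inv, abs_pow,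
    ENNReal.ofReal_inv_of_pos (pow_pos (abs_pos.mpr hr) _), ENNReal.ofReal_pow (abs_nonneg r)]

theorem map_add_smul_prodMk_add_smul (ht : t₁ ≠ t₂) :
    (μ.prod μ).map (fun w => (w.2 + t₁ • w.1, w.2 + t₂ • w.1)) =
      (ENNReal.ofReal |t₁ - t₂| ^ finrank ℝ E)⁻¹ • μ.prod μ := by
  have shear : MeasurePreserving (fun w : E × E => (w.1, w.2 + t₁ • w.1)) (μ.prod μ) (μ.prod μ) :=
    measurePreserving_prod_add_comp_fst (measurable_const_smul t₁)
  have dilation : (μ.prod μ).map (Prod.map ((t₂ - t₁) • ·) id) =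
      (ENNReal.ofReal |t₁ - t₂| ^ finrank ℝ E)⁻¹ • μ.prod μ := by
    rw [← Measure.map_prod_map μ μ (measurable_const_smul _) measurable_id, Measure.map_id,
      map_smul_eq_inv_pow_smul μ (sub_ne_zero.mpr ht.symm), Measure.prod_smul_left, abs_sub_comm]
  have swap_add : MeasurePreserving (fun w : E × E => (w.2, w.2 + w.1)) (μ.prod μ) (μ.prod μ) :=
    measurePreserving_prod_add_swap μ μ
  have factorization : (fun w : E × E => (w.2 + t₁ • w.1, w.2 + t₂ • w.1)) =
      (fun w => (w.2, w.2 + w.1)) ∘ Prod.map ((t₂ - t₁) • ·) id ∘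
        fun w => (w.1, w.2 + t₁ • w.1) := by
    ext w <;> simp [sub_smul]
  rw [factorization, ← Measure.map_map swap_add.measurable (by fun_prop),
    ← Measure.map_map (by fun_prop) shear.measurable, shear.map_eq, dilation, Measure.map_smul,
    swap_add.map_eq]

theorem statement11_general (ht : t₁ ≠ t₂) (G : Set (E × E)) :
    μ.prod μ G ≤ (ENNReal.ofReal |t₁ - t₂| ^ finrank ℝ E)⁻¹ *
      μ ((fun w => w.2 + t₁ • w.1) '' G) * μ ((fun w => w.2 + t₂ • w.1) '' G) := by
  set A := (fun w : E × E => w.2 + t₁ • w.1) '' G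
  set B := (fun w : E × E => w.2 + t₂ • w.1) '' G
  let T : E × E → E × E := fun w => (w.2 + t₁ • w.1, w.2 + t₂ • w.1)
  have G_subset : G ⊆ T ⁻¹' (A ×ˢ B) := fun w hw =>
    ⟨Set.mem_image_of_mem _ hw, Set.mem_image_of_mem _ hw⟩
  calc μ.prod μ G ≤ μ.prod μ (T ⁻¹' (A ×ˢ B)) := measure_mono G_subset
    _ ≤ (μ.prod μ).map T (A ×ˢ B) := Measure.le_map_apply (by fun_prop) _
    _ = (ENNReal.ofReal |t₁ - t₂| ^ finrank ℝ E)⁻¹ * μ A * μ B := by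
      rw [map_add_smul_prodMk_add_smul μ ht, Measure.smul_apply, smul_eq_mul, Measure.prod_prod,
        mul_assoc]

end TwoPoints

theorem lineSlice_eq_image {n : ℕ} (G : Set (Euc n × Euc n)) (t : ℝ) :
    lineSlice G t = (fun w => w.2 + t • w.1) '' G := by
  simp only [lineSlice, Set.image, eq_comm]

theorem Dcoef_eq_inv_pow {d : ℕ} (hd : 1 ≤ d) (t t' : ℝ) :
    Dcoef d t t' = (ENNReal.ofReal |t - t'| ^ (d - 1))⁻¹ := by
  rw [Dcoef, ENNReal.rpow_neg, ← Nat.cast_pred hd, ENNReal.rpow_natCast]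

/-- The trivial two-slice estimate:
`|G| ≤ |t₁ - t₂|^{-(d-1)} ℒ^{d-1}(π_{t₁}(G)) ℒ^{d-1}(π_{t₂}(G))`. -/
theorem statement11 (d : ℕ) (hd : 2 ≤ d) (G : Set (Euc (d - 1) × Euc (d - 1)))
    (hG : MeasurableSet G) (hGfin : volume G ≠ ⊤) (hmfin : mG G ≠ ⊤)
    (t₁ t₂ : ℝ) (ht : t₁ ≠ t₂)
    (h₁ : volume (lineSlice G t₁) ≠ ⊤) (h₂ : volume (lineSlice G t₂) ≠ ⊤) :
    volume G ≤ Dcoef (d) t₁ t₂ * volume (lineSlice G t₁) * volume (lineSlice G t₂) := by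
  simpa only [Measure.volume_eq_prod, lineSlice_eq_image, Dcoef_eq_inv_pow (one_le_two.trans hd),
    finrank_euclideanSpace_fin] using statement11_general volume ht G

end
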